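/- Let x : [0,1] → ℝ be a nonconstant continuous function that admits the Hurst roughness exponent H. For ν ∈ ℕ and n ∈ ℕ define ξ⁻_{ν,n} := (1/(2n)) log₂ Σ_{m=1}^{n−1} (1/m^ν) Σ_{k=1}^{m^ν} F̂⁻¹_m(2^{−m}⌊2^m(k−1)/m^ν⌋) and ξ⁺_{ν,n} := (1/(2n)) log₂ Σ_{m=1}^{n−1} (1/m^ν) Σ_{k=1}^{m^ν} F̂⁻¹_m(2^{−m}⌈2^m k/m^ν⌉). If for some ν ∈ ℕ the limits ξ⁻_ν := lim_{n→∞} ξ⁻_{ν,n} and ξ⁺_ν := lim_{n→∞} ξ⁺_{ν,n} exist, then 1 − ξ⁺_ν ≤ H ≤ 1 − ξ⁻_ν. -/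

import Mathlib

/-!
Write `D_{m,k} = 2^{-m/2} θ_{m,k}` for the difference of the increments of `x` over the two halves
of the `k`-th dyadic interval of generation `m`; the quantile function `F̂⁻¹_m` refers to the
numbers `2^m θ²_{m,k} = 4^m D²_{m,k}`.

*The bound `1 - ξ⁺ ≤ H`* (`high_bound`). The summand `k = m^ν` of `ξ⁺` is the maximum of
`4^m D²_{m,j}` over `j`, with the polynomial weight `m^{-ν}`. Hence `h < 1 - ξ⁺` gives
`|D_{m,k}| = O(2^{-hm})` uniformly in `k`. As `ξ⁺ ≥ 0`, we have `h < 1`, and the recursion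
`|Δ_{m+1}| ≤ (|Δ_m| + |D_m|) / 2` turns this into `O(2^{-hm})` for the increments themselves
(`dyInc_bound`). So the `1/h`-variation is bounded, which is impossible if `h > H`.

*The bound `H ≤ 1 - ξ⁻`* (`low_bound`). If `h < H`, the `1/h`-variation is bounded. At least a
fraction `1/m^ν` of the coefficients lies at or above each quantile used in `ξ⁻`, so Markov's
inequality, applied to `∑_k |D_{m,k}|^p ≤ 2^p V_{m+1}^{(p)}` with `p = 1/h`, bounds these quantiles
by `2^{2m(1-h)}` up to a polynomial factor (`FhatInv_low_le`). Summing over `m` gives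
`ξ⁻ ≤ 1 - h`.
-/

open Filter Finset

noncomputable section

/-- The `n`-th dyadic `p`-th variation of `x`. -/
def dyadicVar (x : ℝ → ℝ) (p : ℝ) (n : ℕ) : ℝ :=
  ∑ k ∈ Finset.range (2 ^ n), |x (((k : ℝ) + 1) / 2 ^ n) - x ((k : ℝ) / 2 ^ n)| ^ p

/-- `x` is nonconstant on `[0,1]`. -/
def Nonconstant (x : ℝ → ℝ) : Prop :=
  ∃ s ∈ Set.Icc (0 : ℝ) 1, ∃ t ∈ Set.Icc (0 : ℝ) 1, x s ≠ x t

/-- `x` admits the Hurst roughness exponent `H ∈ (0,1]`. -/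
def HasHurstExponent (x : ℝ → ℝ) (H : ℝ) : Prop :=
  0 < H ∧ H ≤ 1 ∧
  (∀ p : ℝ, 1 / H < p → Tendsto (dyadicVar x p) atTop (nhds 0)) ∧
  (∀ p : ℝ, 0 < p → p < 1 / H → Tendsto (dyadicVar x p) atTop atTop)

/-- Faber–Schauder coefficient `θ_{m,k}` of `x`. -/
def fsCoeff (x : ℝ → ℝ) (m k : ℕ) : ℝ :=
  2 ^ ((m : ℝ) / 2) *
    (2 * x ((2 * (k : ℝ) + 1) / 2 ^ (m + 1)) - x ((k : ℝ) / 2 ^ m) - x (((k : ℝ) + 1) / 2 ^ m))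

/-- `s_n = (∑_{m<n} ∑_{k<2^m} θ_{m,k}²)^{1/2}`. -/
def sSeq (x : ℝ → ℝ) (n : ℕ) : ℝ :=
  Real.sqrt (∑ m ∈ Finset.range n, ∑ k ∈ Finset.range (2 ^ m), fsCoeff x m k ^ 2)

/-- `ξ_n = (1/n) log₂ s_n`. -/
def xiSeq (x : ℝ → ℝ) (n : ℕ) : ℝ := Real.logb 2 (sSeq x n) / n

/-- A nondecreasing function `ϱ : ℕ → [1,∞)` is subexponential if `(1/n) log ϱ(n) → 0`. -/
def Subexponential (ϱ : ℕ → ℝ) : Prop :=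
  Monotone ϱ ∧ (∀ n, 1 ≤ ϱ n) ∧ Tendsto (fun n : ℕ => Real.log (ϱ n) / n) atTop (nhds 0)

/-- The quantity `2^{-(n-1)} ∑_{k<2^{n-1}} (∑_{m<n} 2^m θ²_{m,⌊2^{m-n+1}k⌋})^{p/2}`;
note that `⌊2^{m-n+1}k⌋ = k / 2^{n-1-m}` (natural number division). -/
def RJquantity (x : ℝ → ℝ) (p : ℝ) (n : ℕ) : ℝ :=
  (∑ k ∈ Finset.range (2 ^ (n - 1)),
      (∑ m ∈ Finset.range n, 2 ^ m * fsCoeff x m (k / 2 ^ (n - 1 - m)) ^ 2) ^ (p / 2)) /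
    2 ^ (n - 1)

/-- The reverse Jensen condition on the Faber–Schauder coefficients of `x`. -/
def ReverseJensen (x : ℝ → ℝ) : Prop :=
  ∀ p : ℝ, 1 ≤ p → ∃ np : ℕ, ∃ ϱ : ℕ → ℝ, Subexponential ϱ ∧
    ∀ n : ℕ, np ≤ n →
      (ϱ n)⁻¹ * sSeq x n ^ p ≤ RJquantity x p n ∧ RJquantity x p n ≤ ϱ n * sSeq x n ^ p

open scoped Classical in
/-- Empirical distribution function `F̂_m` of the `m`-th generation squared
Faber–Schauder coefficients. -/
def Fhat (x : ℝ → ℝ) (m : ℕ) (t : ℝ) : ℝ :=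
  ((Finset.range (2 ^ m)).filter (fun k => fsCoeff x m k ^ 2 ≤ t / 2 ^ m)).card / 2 ^ m

/-- Quantile function `F̂⁻¹_m(u) = inf{t : F̂_m(t) ≥ u}`. -/
def FhatInv (x : ℝ → ℝ) (m : ℕ) (u : ℝ) : ℝ :=
  sInf {t : ℝ | u ≤ Fhat x m t}

/-- `ξ⁻_{ν,n}`. -/
def xiLow (x : ℝ → ℝ) (ν n : ℕ) : ℝ :=
  (1 / (2 * (n : ℝ))) * Real.logb 2
    (∑ m ∈ Finset.Ico 1 n, (1 / (m : ℝ) ^ ν) *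
      ∑ k ∈ Finset.Icc 1 (m ^ ν),
        FhatInv x m ((⌊(2 : ℝ) ^ m * ((k : ℝ) - 1) / (m : ℝ) ^ ν⌋ : ℝ) / 2 ^ m))

/-- `ξ⁺_{ν,n}`. -/
def xiHigh (x : ℝ → ℝ) (ν n : ℕ) : ℝ :=
  (1 / (2 * (n : ℝ))) * Real.logb 2
    (∑ m ∈ Finset.Ico 1 n, (1 / (m : ℝ) ^ ν) *
      ∑ k ∈ Finset.Icc 1 (m ^ ν),
        FhatInv x m ((⌈(2 : ℝ) ^ m * (k : ℝ) / (m : ℝ) ^ ν⌉ : ℝ) / 2 ^ m))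

/-! ### Increments and second differences -/

/-- The increment of `x` over the `k`-th dyadic interval of generation `n`. -/
def dyInc (x : ℝ → ℝ) (n k : ℕ) : ℝ := x (((k : ℝ) + 1) / 2 ^ n) - x ((k : ℝ) / 2 ^ n)

/-- The difference of the increments of `x` over the two halves of the `k`-th dyadic interval of
generation `m`; it equals `2^{-m/2} θ_{m,k}`. -/
def secDiff (x : ℝ → ℝ) (m k : ℕ) : ℝ := dyInc x (m + 1) (2 * k) - dyInc x (m + 1) (2 * k + 1)

lemma dyInc_eq_add (x : ℝ → ℝ) (m k : ℕ) :
    dyInc x m k = dyInc x (m + 1) (2 * k) + dyInc x (m + 1) (2 * k + 1) := by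
  unfold dyInc
  have h1 : (((2 * k : ℕ) : ℝ)) / 2 ^ (m + 1) = (k : ℝ) / 2 ^ m := by
    push_cast; rw [pow_succ]; field_simp
  have h2 : (((2 * k + 1 : ℕ) : ℝ) + 1) / 2 ^ (m + 1) = ((k : ℝ) + 1) / 2 ^ m := by
    push_cast; rw [pow_succ]; field_simp; ring
  rw [h1, h2]
  push_cast
  ring

lemma fsCoeff_sq (x : ℝ → ℝ) (m k : ℕ) : fsCoeff x m k ^ 2 = 2 ^ m * secDiff x m k ^ 2 := by
  have h0 : ((2 : ℝ) ^ ((m : ℝ) / 2)) ^ 2 = 2 ^ m := by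
    rw [← Real.rpow_natCast, ← Real.rpow_mul (by norm_num), ← Real.rpow_natCast]
    congr 1
    push_cast
    ring
  have h1 : (((2 * k : ℕ) : ℝ)) / 2 ^ (m + 1) = (k : ℝ) / 2 ^ m := by
    push_cast; rw [pow_succ]; field_simp
  have h2 : (((2 * k + 1 : ℕ) : ℝ) + 1) / 2 ^ (m + 1) = ((k : ℝ) + 1) / 2 ^ m := by
    push_cast; rw [pow_succ]; field_simp; ring
  unfold fsCoeff secDiff dyInc
  rw [mul_pow, h0, h1, h2]
  push_cast
  ring

lemma sum_range_two_mul (f : ℕ → ℝ) (N : ℕ) :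
    ∑ i ∈ range (2 * N), f i = ∑ i ∈ range N, (f (2 * i) + f (2 * i + 1)) := by
  induction N with
  | zero => simp
  | succ N ih =>
    rw [show 2 * (N + 1) = 2 * N + 1 + 1 by ring, sum_range_succ, sum_range_succ, ih,
      sum_range_succ]
    ring

lemma abs_sub_rpow_le (a b p : ℝ) (hp : 0 < p) :
    |a - b| ^ p ≤ 2 ^ p * (|a| ^ p + |b| ^ p) := by
  have key : ∀ a b : ℝ, |b| ≤ |a| → |a - b| ^ p ≤ 2 ^ p * (|a| ^ p + |b| ^ p) := by
    intro a b h
    have h1 : |a - b| ≤ 2 * |a| := by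
      have := abs_sub a b
      linarith
    calc |a - b| ^ p ≤ (2 * |a|) ^ p := Real.rpow_le_rpow (abs_nonneg _) h1 hp.le
      _ = 2 ^ p * |a| ^ p := Real.mul_rpow (by norm_num) (abs_nonneg _)
      _ ≤ _ := by
        have : 0 ≤ |b| ^ p := by positivity
        gcongr
        linarith
  rcases le_total |b| |a| with h | h
  · exact key a b h
  · rw [abs_sub_comm, add_comm]
    exact key b a h

lemma sum_secDiff_rpow_le (x : ℝ → ℝ) (p : ℝ) (hp : 0 < p) (m : ℕ) :
    ∑ k ∈ range (2 ^ m), |secDiff x m k| ^ p ≤ 2 ^ p * dyadicVar x p (m + 1) := by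
  have : dyadicVar x p (m + 1) = ∑ k ∈ range (2 ^ (m + 1)), |dyInc x (m + 1) k| ^ p := rfl
  rw [this, pow_succ', sum_range_two_mul, mul_sum]
  exact sum_le_sum fun k _ => abs_sub_rpow_le _ _ _ hp

/-! ### The empirical quantile function -/

lemma FhatInv_nonneg (x : ℝ → ℝ) (m : ℕ) (u : ℝ) : 0 ≤ FhatInv x m u := by
  unfold FhatInv
  rcases le_or_gt u 0 with hu | hu
  · -- the infimum over all of `ℝ` is the junk value `0`
    have : {t : ℝ | u ≤ Fhat x m t} = Set.univ := by
      ext t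
      simp only [Set.mem_ofPred_eq, Set.mem_univ, iff_true]
      refine hu.trans ?_
      unfold Fhat
      positivity
    rw [this, Real.sInf_univ]
  · apply Real.sInf_nonneg
    intro t ht
    by_contra hneg
    push Not at hneg
    have : Fhat x m t = 0 := by
      unfold Fhat
      rw [filter_false_of_mem]
      · simp
      · intro k _ hk
        have h2 : t / 2 ^ m < 0 := div_neg_of_neg_of_pos hneg (by positivity)
        nlinarith [sq_nonneg (fsCoeff x m k)]
    simp only [Set.mem_ofPred_eq] at ht
    linarith

lemma FhatInv_le (x : ℝ → ℝ) (m : ℕ) (u b : ℝ) (hb : 0 ≤ b) (h : u ≤ Fhat x m b) :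
    FhatInv x m u ≤ b := by
  unfold FhatInv
  by_cases hbd : BddBelow {t : ℝ | u ≤ Fhat x m t}
  · exact csInf_le hbd h
  · rw [Real.sInf_of_not_bddBelow hbd]
    exact hb

/-- The quantile at level `1` is the maximum of `2^m θ²_{m,k} = 4^m D²_{m,k}`. -/
lemma le_FhatInv_one (x : ℝ → ℝ) (m k : ℕ) (hk : k < 2 ^ m) :
    4 ^ m * secDiff x m k ^ 2 ≤ FhatInv x m 1 := by
  classical
  have h4 : (4 : ℝ) ^ m = 2 ^ m * 2 ^ m := by rw [← mul_pow]; norm_num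
  have hcard : ∀ t : ℝ, 1 ≤ Fhat x m t ↔
      ∀ k ∈ range (2 ^ m), fsCoeff x m k ^ 2 ≤ t / 2 ^ m := by
    intro t
    unfold Fhat
    rw [one_le_div (by positivity)]
    constructor
    · intro h
      rw [← filter_eq_self]
      apply eq_of_subset_of_card_le (filter_subset _ _)
      rw [card_range]
      have h' : ((2 ^ m : ℕ) : ℝ) ≤ _ := (Nat.cast_pow 2 m).trans_le h
      convert Nat.cast_le.mp h'
    · intro h
      rw [filter_true_of_mem h]
      simp
  unfold FhatInv
  apply le_csInf
  · refine ⟨2 ^ m * ∑ k ∈ range (2 ^ m), fsCoeff x m k ^ 2, ?_⟩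
    rw [Set.mem_ofPred_eq, hcard]
    intro k hk
    rw [mul_div_assoc, mul_div_cancel₀ _ (by positivity)]
    exact single_le_sum (f := fun k => fsCoeff x m k ^ 2) (fun _ _ => sq_nonneg _) hk
  · intro t ht
    have := (hcard t).1 ht k (mem_range.2 hk)
    rw [fsCoeff_sq, le_div_iff₀ (by positivity)] at this
    rw [h4]
    linarith

/-- Markov bound for the quantiles entering `ξ⁻`: at least a fraction `1/m^ν` of the
coefficients lies at or above such a quantile, so it is controlled by the `p`-th variation. -/
lemma FhatInv_low_le (x : ℝ → ℝ) (p K : ℝ) (hp : 0 < p) (hK : 0 < K) (ν m k : ℕ) (hm : 1 ≤ m)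
    (hk : k ≤ m ^ ν) (hV : dyadicVar x p (m + 1) ≤ K) :
    FhatInv x m ((⌊(2 : ℝ) ^ m * ((k : ℝ) - 1) / (m : ℝ) ^ ν⌋ : ℝ) / 2 ^ m) ≤
      4 ^ m * (2 * (K * m ^ ν / 2 ^ m) ^ (1 / p)) ^ 2 := by
  classical
  have h4 : (4 : ℝ) ^ m = 2 ^ m * 2 ^ m := by rw [← mul_pow]; norm_num
  have hm0 : (0 : ℝ) < m := by exact_mod_cast hm
  set a : ℝ := 2 * (K * m ^ ν / 2 ^ m) ^ (1 / p) with ha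
  have ha0 : 0 < a := by positivity
  have hap : a ^ p = 2 ^ p * (K * m ^ ν / 2 ^ m) := by
    rw [ha, Real.mul_rpow (by norm_num) (by positivity), ← Real.rpow_mul (by positivity),
      one_div_mul_cancel hp.ne', Real.rpow_one]
  apply FhatInv_le _ _ _ _ (by positivity)
  by_contra hcon
  push Not at hcon
  unfold Fhat at hcon
  rw [div_lt_div_iff_of_pos_right (by positivity)] at hcon
  have hk' : (k : ℝ) ≤ (m : ℝ) ^ ν := by exact_mod_cast hk
  have hfl : (⌊(2 : ℝ) ^ m * ((k : ℝ) - 1) / (m : ℝ) ^ ν⌋ : ℝ) ≤ 2 ^ m - 2 ^ m / (m : ℝ) ^ ν := by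
    refine (Int.floor_le _).trans ?_
    rw [div_le_iff₀ (by positivity), sub_mul, div_mul_cancel₀ _ (by positivity)]
    have : (0 : ℝ) < 2 ^ m := by positivity
    nlinarith
  have hsplit := card_filter_add_card_filter_not (s := range (2 ^ m))
    (fun k => fsCoeff x m k ^ 2 ≤ 4 ^ m * a ^ 2 / 2 ^ m)
  rw [card_range] at hsplit
  have hsplit' := congrArg (Nat.cast : ℕ → ℝ) hsplit
  push_cast at hsplit'
  set G := (range (2 ^ m)).filter (fun k => ¬ fsCoeff x m k ^ 2 ≤ 4 ^ m * a ^ 2 / 2 ^ m) with hG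
  have hGc : 2 ^ m / (m : ℝ) ^ ν < (G.card : ℝ) := by
    have h := hcon.trans_le hfl
    have e : ∀ (P : ℕ → Prop) (d1 d2 : DecidablePred P),
        (@filter ℕ P d1 (range (2 ^ m))).card = (@filter ℕ P d2 (range (2 ^ m))).card := by
      intro P d1 d2; congr!
    rw [e _ _ (fun k => Classical.propDecidable _)] at hsplit'
    linarith
  have hmarkov : (G.card : ℝ) * a ^ p ≤ 2 ^ p * K := by
    calc (G.card : ℝ) * a ^ p = ∑ k ∈ G, a ^ p := by rw [sum_const, nsmul_eq_mul]
      _ ≤ ∑ k ∈ G, |secDiff x m k| ^ p := by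
        apply sum_le_sum
        intro k hk
        have h1 := (mem_filter.1 hk).2
        rw [fsCoeff_sq, h4, mul_assoc, mul_div_cancel_left₀ _ (by positivity)] at h1
        push Not at h1
        have h2 : a ^ 2 < secDiff x m k ^ 2 := lt_of_mul_lt_mul_left h1 (by positivity)
        apply Real.rpow_le_rpow ha0.le _ hp.le
        rw [← abs_of_pos ha0]
        exact (sq_lt_sq.1 h2).le
      _ ≤ ∑ k ∈ range (2 ^ m), |secDiff x m k| ^ p :=
        sum_le_sum_of_subset_of_nonneg (filter_subset _ _) fun _ _ _ => by positivity
      _ ≤ 2 ^ p * dyadicVar x p (m + 1) := sum_secDiff_rpow_le x p hp m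
      _ ≤ _ := by gcongr
  have hlt : 2 ^ m / (m : ℝ) ^ ν * a ^ p < G.card * a ^ p :=
    mul_lt_mul_of_pos_right hGc (by positivity)
  have heq : 2 ^ m / (m : ℝ) ^ ν * a ^ p = 2 ^ p * K := by
    rw [hap]; field_simp
  linarith

/-! ### Exponential growth rates -/

lemma rate_le (S : ℕ → ℝ) (C c ξ : ℝ) (hC : 0 < C) (hc : 0 ≤ c) (hS0 : ∀ n, 0 ≤ S n)
    (hS : ∀ n, S n ≤ C * ((2 : ℝ) ^ (2 * c)) ^ n)
    (h : Tendsto (fun n : ℕ => (1 / (2 * (n : ℝ))) * Real.logb 2 (S n)) atTop (nhds ξ)) :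
    ξ ≤ c := by
  have hlim : Tendsto (fun n : ℕ => |Real.logb 2 C| / 2 * (1 / (n : ℝ)) + c) atTop (nhds c) := by
    have := (tendsto_one_div_atTop_nhds_zero_nat (𝕜 := ℝ)).const_mul (|Real.logb 2 C| / 2)
    simpa using this.add_const c
  refine le_of_tendsto_of_tendsto h hlim ?_
  filter_upwards [eventually_gt_atTop 0] with n hn
  have hn' : (0 : ℝ) < n := by exact_mod_cast hn
  rcases (hS0 n).eq_or_lt with h0 | h0
  · rw [← h0]
    simp only [Real.logb_zero, mul_zero]
    positivity
  · have h1 : Real.logb 2 (S n) ≤ |Real.logb 2 C| + n * (2 * c) := by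
      calc Real.logb 2 (S n) ≤ Real.logb 2 (C * ((2 : ℝ) ^ (2 * c)) ^ n) :=
            Real.logb_le_logb_of_le (by norm_num) h0 (hS n)
        _ = Real.logb 2 C + n * (2 * c) := by
          rw [Real.logb_mul hC.ne' (by positivity), Real.logb_pow,
            Real.logb_rpow (by norm_num) (by norm_num)]
        _ ≤ _ := by gcongr; exact le_abs_self _
    calc (1 / (2 * (n : ℝ))) * Real.logb 2 (S n)
        ≤ (1 / (2 * (n : ℝ))) * (|Real.logb 2 C| + n * (2 * c)) := by gcongr
      _ = _ := by field_simp

lemma rate_nonneg (S : ℕ → ℝ) (ξ : ℝ) (hS0 : ∀ n, 0 ≤ S n) (hS : Monotone S)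
    (h : Tendsto (fun n : ℕ => (1 / (2 * (n : ℝ))) * Real.logb 2 (S n)) atTop (nhds ξ)) :
    0 ≤ ξ := by
  by_cases hall : ∃ n0, 0 < S n0
  · obtain ⟨n0, hn0⟩ := hall
    have hlim : Tendsto (fun n : ℕ => Real.logb 2 (S n0) / 2 * (1 / (n : ℝ))) atTop (nhds 0) := by
      simpa using (tendsto_one_div_atTop_nhds_zero_nat (𝕜 := ℝ)).const_mul (Real.logb 2 (S n0) / 2)
    refine le_of_tendsto_of_tendsto hlim h ?_
    filter_upwards [eventually_ge_atTop n0] with n hn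
    have h1 : Real.logb 2 (S n0) ≤ Real.logb 2 (S n) :=
      Real.logb_le_logb_of_le (by norm_num) hn0 (hS hn)
    calc Real.logb 2 (S n0) / 2 * (1 / (n : ℝ)) = (1 / (2 * (n : ℝ))) * Real.logb 2 (S n0) := by
          rw [div_mul_div_comm, mul_one, one_div, div_eq_inv_mul]
      _ ≤ _ := by gcongr
  · push Not at hall
    have : ∀ n, S n = 0 := fun n => le_antisymm (hall n) (hS0 n)
    simp only [this, Real.logb_zero, mul_zero] at h
    exact (tendsto_nhds_unique tendsto_const_nhds h).le

lemma eventually_le_of_rate (S : ℕ → ℝ) (ξ r : ℝ) (hr : ξ < r) (hS0 : ∀ n, 0 ≤ S n)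
    (h : Tendsto (fun n : ℕ => (1 / (2 * (n : ℝ))) * Real.logb 2 (S n)) atTop (nhds ξ)) :
    ∀ᶠ n in atTop, S n ≤ ((4 : ℝ) ^ r) ^ n := by
  filter_upwards [h.eventually_lt_const hr, eventually_gt_atTop 0] with n h1 hn
  have hn' : (0 : ℝ) < n := by exact_mod_cast hn
  rcases (hS0 n).eq_or_lt with h0 | h0
  · rw [← h0]; positivity
  · have h2 : Real.logb 2 (S n) ≤ 2 * n * r := by
      rw [one_div, inv_mul_lt_iff₀ (by positivity)] at h1
      exact h1.le
    rw [Real.logb_le_iff_le_rpow (by norm_num) h0] at h2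
    refine h2.trans_eq ?_
    rw [show (4 : ℝ) = 2 ^ (2 : ℝ) by norm_num, ← Real.rpow_mul (by norm_num),
      ← Real.rpow_natCast, ← Real.rpow_mul (by norm_num)]
    congr 1
    ring

lemma two_rpow_pow_rpow (a b : ℝ) (n : ℕ) :
    (((2 : ℝ) ^ a) ^ n) ^ b = 2 ^ (a * n * b) := by
  rw [← Real.rpow_mul_natCast (by norm_num), ← Real.rpow_mul (by norm_num)]

lemma exists_pow_le (ν : ℕ) (q : ℝ) (hq : 1 < q) :
    ∃ C : ℝ, 0 < C ∧ ∀ m : ℕ, (m : ℝ) ^ ν ≤ C * q ^ m := by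
  obtain ⟨C, hC⟩ := (tendsto_pow_const_div_const_pow_of_one_lt ν hq).bddAbove_range
  refine ⟨max C 1, by positivity, fun m => ?_⟩
  have h1 : (m : ℝ) ^ ν / q ^ m ≤ C := hC ⟨m, rfl⟩
  rw [div_le_iff₀ (by positivity)] at h1
  refine h1.trans ?_
  gcongr
  exact le_max_left _ _

/-! ### The two estimates -/

/-- If the `p`-th variation stays bounded for `p = 1/h`, then the growth rate `ξ⁻` is at most
`1 - h`. -/
lemma low_bound (x : ℝ → ℝ) (h K : ℝ) (h0 : 0 < h) (h1 : h < 1) (ν : ℕ)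
    (hV : ∀ n, dyadicVar x (1 / h) n ≤ K) (ξ : ℝ)
    (hm : Tendsto (fun n => xiLow x ν n) atTop (nhds ξ)) : ξ ≤ 1 - h := by
  have hV' : ∀ n, dyadicVar x (1 / h) n ≤ max K 1 := fun n => (hV n).trans (le_max_left _ _)
  generalize hKe : max K 1 = K' at hV'
  have hK' : 0 < K' := by rw [← hKe]; positivity
  apply le_of_forall_pos_le_add
  intro ε hε
  -- the polynomial factor `m^ν` costs an arbitrarily small exponent `ε`
  obtain ⟨C, hC, hCm⟩ := exists_pow_le ν ((2 : ℝ) ^ (ε / h))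
    (Real.one_lt_rpow (by norm_num) (by positivity))
  set c := 1 - h + ε with hc
  have hc0 : 0 < c := by linarith
  set B : ℝ := (2 : ℝ) ^ (2 * c) with hB
  have hB1 : 1 < B := Real.one_lt_rpow (by norm_num) (by positivity)
  set A : ℝ := 4 * (K' * C) ^ (2 * h) with hA
  have hA0 : 0 < A := by positivity
  have hb : ∀ m : ℕ, 4 ^ m * (2 * (K' * (m : ℝ) ^ ν / 2 ^ m) ^ h) ^ 2 ≤ A * B ^ m := by
    intro m
    have e1 : (K' * (m : ℝ) ^ ν / 2 ^ m) ^ h ≤ (K' * C * ((2 : ℝ) ^ (ε / h - 1)) ^ m) ^ h := by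
      apply Real.rpow_le_rpow (by positivity) _ h0.le
      rw [Real.rpow_sub (by norm_num), Real.rpow_one, div_pow, ← mul_div_assoc, mul_assoc]
      gcongr
      exact hCm m
    have e2 : (K' * C * ((2 : ℝ) ^ (ε / h - 1)) ^ m) ^ h
        = (K' * C) ^ h * ((2 : ℝ) ^ (ε - h)) ^ m := by
      rw [Real.mul_rpow (by positivity) (by positivity), two_rpow_pow_rpow,
        ← Real.rpow_mul_natCast (by norm_num)]
      congr 2
      field_simp
    rw [e2] at e1
    calc 4 ^ m * (2 * (K' * (m : ℝ) ^ ν / 2 ^ m) ^ h) ^ 2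
        ≤ 4 ^ m * (2 * ((K' * C) ^ h * ((2 : ℝ) ^ (ε - h)) ^ m)) ^ 2 := by gcongr
      _ = 4 * ((K' * C) ^ h) ^ 2 * (4 * ((2 : ℝ) ^ (ε - h)) ^ 2) ^ m := by
        rw [mul_pow 4]; ring
      _ = A * B ^ m := by
        congr 2
        · rw [← Real.rpow_natCast, ← Real.rpow_mul (by positivity)]
          congr 1; push_cast; ring
        · rw [← Real.rpow_natCast, ← Real.rpow_mul (by norm_num),
            show (4 : ℝ) = 2 ^ (2 : ℝ) by norm_num, ← Real.rpow_add (by norm_num), hB]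
          congr 1; push_cast; rw [hc]; ring
  refine rate_le _ (A / (B - 1)) c ξ (div_pos hA0 (by linarith)) hc0.le ?_ ?_ hm
  · intro n
    exact sum_nonneg fun m _ => mul_nonneg (by positivity)
      (sum_nonneg fun k _ => FhatInv_nonneg _ _ _)
  · intro n
    have hterm : ∀ m ∈ Finset.Ico 1 n, (1 / (m : ℝ) ^ ν) * ∑ k ∈ Finset.Icc 1 (m ^ ν),
        FhatInv x m ((⌊(2 : ℝ) ^ m * ((k : ℝ) - 1) / (m : ℝ) ^ ν⌋ : ℝ) / 2 ^ m) ≤ A * B ^ m := by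
      intro m hm
      have hm1 := (Finset.mem_Ico.1 hm).1
      have hm0 : (0 : ℝ) < m := by exact_mod_cast hm1
      have hs : ∑ k ∈ Finset.Icc 1 (m ^ ν),
          FhatInv x m ((⌊(2 : ℝ) ^ m * ((k : ℝ) - 1) / (m : ℝ) ^ ν⌋ : ℝ) / 2 ^ m)
          ≤ ∑ k ∈ Finset.Icc 1 (m ^ ν), A * B ^ m := by
        apply sum_le_sum
        intro k hk
        have := FhatInv_low_le x (1 / h) K' (by positivity) hK' ν m k hm1
          (Finset.mem_Icc.1 hk).2 (hV' _)
        rw [one_div_one_div] at this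
        exact this.trans (hb m)
      rw [sum_const, Nat.card_Icc, nsmul_eq_mul, Nat.add_sub_cancel] at hs
      push_cast at hs
      rw [one_div, inv_mul_le_iff₀ (by positivity)]
      exact hs
    calc _ ≤ ∑ m ∈ Finset.Ico 1 n, A * B ^ m := sum_le_sum hterm
      _ ≤ ∑ m ∈ range n, A * B ^ m := by
        apply sum_le_sum_of_subset_of_nonneg
        · intro m hm
          exact mem_range.2 (Finset.mem_Ico.1 hm).2
        · intros; positivity
      _ = A * ((B ^ n - 1) / (B - 1)) := by rw [← mul_sum, geom_sum_eq hB1.ne']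
      _ ≤ A / (B - 1) * B ^ n := by
        have : 0 < B - 1 := by linarith
        rw [div_mul_eq_mul_div, ← mul_div_assoc]
        gcongr
        linarith

/-- Second differences of order `β^n` with `β > 1/2` force increments of order `β^n`, since
halving an interval gives `|Δ_{n+1}| ≤ (|Δ_n| + |D_n|) / 2`. -/
lemma dyInc_bound (x : ℝ → ℝ) (N : ℕ) (β C : ℝ) (hβ : 1 / 2 < β)
    (hD : ∀ m, N ≤ m → ∀ k < 2 ^ m, |secDiff x m k| ≤ C * β ^ m) :
    ∃ K, 0 ≤ K ∧ ∀ n, N ≤ n → ∀ k < 2 ^ n, |dyInc x n k| ≤ K * β ^ n := by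
  have hβ0 : 0 < β := by linarith
  set K0 := (∑ k ∈ range (2 ^ N), |dyInc x N k|) / β ^ N with hK0
  have hK00 : 0 ≤ K0 := div_nonneg (sum_nonneg fun _ _ => abs_nonneg _) (by positivity)
  set K := max K0 (C / (2 * β - 1)) with hK
  have hK2 : C ≤ K * (2 * β - 1) := by
    rw [← div_le_iff₀ (by linarith)]
    exact le_max_right _ _
  refine ⟨K, hK00.trans (le_max_left _ _), ?_⟩
  intro n hn
  induction n, hn using Nat.le_induction with
  | base =>
    intro k hk
    have h1 : |dyInc x N k| ≤ ∑ k ∈ range (2 ^ N), |dyInc x N k| :=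
      single_le_sum (f := fun k => |dyInc x N k|) (fun _ _ => abs_nonneg _) (mem_range.2 hk)
    rw [← div_le_iff₀ (by positivity)]
    refine le_trans ?_ (le_max_left _ _)
    rw [hK0]
    gcongr
  | succ n hn ih =>
    intro k hk
    have hj : k / 2 < 2 ^ n := by rw [pow_succ] at hk; omega
    have i1 := abs_le.1 (ih (k / 2) hj)
    have i2 := abs_le.1 (hD n hn (k / 2) hj)
    rw [dyInc_eq_add] at i1
    unfold secDiff at i2
    have hfin : K * β ^ n + C * β ^ n ≤ 2 * (K * β ^ (n + 1)) := by
      have : 0 < β ^ n := by positivity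
      rw [pow_succ]
      nlinarith
    rcases Nat.even_or_odd' k with ⟨j, rfl | rfl⟩
    · rw [show 2 * j / 2 = j by omega] at i1 i2
      rw [abs_le]; constructor <;> linarith
    · rw [show (2 * j + 1) / 2 = j by omega] at i1 i2
      rw [abs_le]; constructor <;> linarith

/-- If `ξ⁺ < 1 - h`, then the `1/h`-variation is eventually bounded. -/
lemma high_bound (x : ℝ → ℝ) (h : ℝ) (h0 : 0 < h) (ν : ℕ) (ξ : ℝ) (hξ : ξ < 1 - h)
    (hp : Tendsto (fun n => xiHigh x ν n) atTop (nhds ξ)) :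
    ∃ K : ℝ, ∀ᶠ n in atTop, dyadicVar x (1 / h) n ≤ K := by
  unfold xiHigh at hp
  set S : ℕ → ℝ := fun n => ∑ m ∈ Finset.Ico 1 n, (1 / (m : ℝ) ^ ν) *
      ∑ k ∈ Finset.Icc 1 (m ^ ν),
        FhatInv x m ((⌈(2 : ℝ) ^ m * (k : ℝ) / (m : ℝ) ^ ν⌉ : ℝ) / 2 ^ m) with hS
  have hterm0 : ∀ m : ℕ, 0 ≤ (1 / (m : ℝ) ^ ν) * ∑ k ∈ Finset.Icc 1 (m ^ ν),
        FhatInv x m ((⌈(2 : ℝ) ^ m * (k : ℝ) / (m : ℝ) ^ ν⌉ : ℝ) / 2 ^ m) := fun m =>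
    mul_nonneg (by positivity) (sum_nonneg fun k _ => FhatInv_nonneg _ _ _)
  have hS0 : ∀ n, 0 ≤ S n := fun n => sum_nonneg fun m _ => hterm0 m
  have hSm : Monotone S := fun a b hab =>
    sum_le_sum_of_subset_of_nonneg (Finset.Ico_subset_Ico_right hab) fun m _ _ => hterm0 m
  have hξ0 : 0 ≤ ξ := rate_nonneg S ξ hS0 hSm hp
  obtain ⟨g, hhg, hgξ⟩ : ∃ g, h < g ∧ ξ < 1 - g := by
    obtain ⟨y, hy1, hy2⟩ := exists_between (show h < 1 - ξ by linarith)
    exact ⟨y, hy1, by linarith⟩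
  obtain ⟨N, hN⟩ := eventually_atTop.1 (eventually_le_of_rate S ξ (1 - g) hgξ hS0 hp)
  obtain ⟨C, hC, hCm⟩ := exists_pow_le ν ((4 : ℝ) ^ (g - h))
    (Real.one_lt_rpow (by norm_num) (by linarith))
  set β : ℝ := (2 : ℝ) ^ (-h) with hβ
  have hβ0 : 0 < β := by positivity
  have hβ2 : β ^ 2 = (4 : ℝ) ^ (-h) := by
    rw [show (4 : ℝ) = 2 ^ (2 : ℝ) by norm_num, hβ, ← Real.rpow_natCast,
      ← Real.rpow_mul (by norm_num), ← Real.rpow_mul (by norm_num)]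
    congr 1; push_cast; ring
  have hβh : 1 / 2 < β := by
    rw [show (1 / 2 : ℝ) = 2 ^ (-1 : ℝ) by rw [Real.rpow_neg_one]; norm_num]
    exact Real.rpow_lt_rpow_of_exponent_lt (by norm_num) (by linarith)
  set R : ℝ := (4 : ℝ) ^ (1 - g) with hR
  have hR0 : 0 < R := by positivity
  -- the summand `k = m^ν` of `ξ⁺` contains the maximal coefficient of generation `m`
  have hD : ∀ m, N + 1 ≤ m → ∀ k < 2 ^ m, |secDiff x m k| ≤ Real.sqrt (C * R) * β ^ m := by
    intro m hm k hk
    have hm0 : (0 : ℝ) < m := by exact_mod_cast (by omega : 0 < m)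
    have hmν : (0 : ℝ) < (m : ℝ) ^ ν := by positivity
    have t1 : FhatInv x m 1 ≤ ∑ k ∈ Finset.Icc 1 (m ^ ν),
        FhatInv x m ((⌈(2 : ℝ) ^ m * (k : ℝ) / (m : ℝ) ^ ν⌉ : ℝ) / 2 ^ m) := by
      have e := single_le_sum (s := Finset.Icc 1 (m ^ ν)) (f := fun k : ℕ =>
        FhatInv x m ((⌈(2 : ℝ) ^ m * (k : ℝ) / (m : ℝ) ^ ν⌉ : ℝ) / 2 ^ m))
        (fun k _ => FhatInv_nonneg _ _ _)
        (Finset.mem_Icc.2 ⟨Nat.one_le_pow _ _ (by omega), le_refl (m ^ ν)⟩)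
      refine le_trans (le_of_eq ?_) e
      have : (2 : ℝ) ^ m * ((m ^ ν : ℕ) : ℝ) / (m : ℝ) ^ ν = ((2 ^ m : ℤ) : ℝ) := by
        push_cast; field_simp
      simp only [this, Int.ceil_intCast]
      push_cast
      rw [div_self (by positivity)]
    have t2 : (1 / (m : ℝ) ^ ν) * FhatInv x m 1 ≤ S (m + 1) := by
      refine le_trans (mul_le_mul_of_nonneg_left t1 (by positivity)) ?_
      exact single_le_sum (s := Finset.Ico 1 (m + 1)) (f := fun m : ℕ => (1 / (m : ℝ) ^ ν) *
        ∑ k ∈ Finset.Icc 1 (m ^ ν),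
          FhatInv x m ((⌈(2 : ℝ) ^ m * (k : ℝ) / (m : ℝ) ^ ν⌉ : ℝ) / 2 ^ m))
        (fun m _ => hterm0 m) (Finset.mem_Ico.2 ⟨by omega, by omega⟩)
    have t3 := t2.trans (hN (m + 1) (by omega))
    rw [one_div, inv_mul_le_iff₀ hmν] at t3
    have t4 := (le_FhatInv_one x m k hk).trans t3
    have t5 : 4 ^ m * secDiff x m k ^ 2 ≤ C * ((4 : ℝ) ^ (g - h)) ^ m * R ^ (m + 1) :=
      t4.trans (by gcongr; exact hCm m)
    have t6 : C * ((4 : ℝ) ^ (g - h)) ^ m * R ^ (m + 1) = 4 ^ m * (C * R * (β ^ 2) ^ m) := by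
      have e : (4 : ℝ) ^ (g - h) * R = 4 * β ^ 2 := by
        rw [hβ2, hR, ← Real.rpow_add (by norm_num)]
        nth_rewrite 2 [← Real.rpow_one (4 : ℝ)]
        rw [← Real.rpow_add (by norm_num)]
        congr 1; ring
      calc C * ((4 : ℝ) ^ (g - h)) ^ m * R ^ (m + 1)
          = C * R * ((4 : ℝ) ^ (g - h) * R) ^ m := by rw [mul_pow, pow_succ]; ring
        _ = _ := by rw [e, mul_pow]; ring
    rw [t6] at t5
    have t7 := le_of_mul_le_mul_left t5 (by positivity)
    apply abs_le_of_sq_le_sq _ (by positivity)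
    rw [mul_pow, Real.sq_sqrt (by positivity), ← pow_mul, mul_comm m 2, pow_mul]
    exact t7
  obtain ⟨K, hK0, hK⟩ := dyInc_bound x (N + 1) β _ hβh hD
  refine ⟨K ^ (1 / h), eventually_atTop.2 ⟨N + 1, fun n hn => ?_⟩⟩
  have hβn : (β ^ n) ^ (1 / h) = ((2 : ℝ) ^ n)⁻¹ := by
    rw [hβ, two_rpow_pow_rpow, ← Real.rpow_natCast, ← Real.rpow_neg (by norm_num)]
    congr 1
    field_simp
  calc dyadicVar x (1 / h) n = ∑ k ∈ range (2 ^ n), |dyInc x n k| ^ (1 / h) := rfl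
    _ ≤ ∑ k ∈ range (2 ^ n), (K * β ^ n) ^ (1 / h) := by
      apply sum_le_sum
      intro k hk
      exact Real.rpow_le_rpow (abs_nonneg _) (hK n hn k (mem_range.1 hk)) (by positivity)
    _ = K ^ (1 / h) := by
      rw [sum_const, card_range, nsmul_eq_mul, Real.mul_rpow hK0 (by positivity), hβn]
      push_cast
      field_simp

theorem stmt8 (x : ℝ → ℝ) (hx : ContinuousOn x (Set.Icc 0 1)) (hnc : Nonconstant x)
    (H : ℝ) (hH : HasHurstExponent x H) (ν : ℕ) (hν : 1 ≤ ν) (ξm ξp : ℝ)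
    (hm : Tendsto (fun n => xiLow x ν n) atTop (nhds ξm))
    (hp : Tendsto (fun n => xiHigh x ν n) atTop (nhds ξp)) :
    1 - ξp ≤ H ∧ H ≤ 1 - ξm := by
  obtain ⟨hH0, hH1, hV0, hVi⟩ := hH
  constructor
  · by_contra hcon
    push Not at hcon
    obtain ⟨h, hh1, hh2⟩ := exists_between hcon
    have h0 : 0 < h := hH0.trans hh1
    obtain ⟨K, hK⟩ := high_bound x h h0 ν ξp (by linarith) hp
    have hinf := hVi (1 / h) (by positivity) (one_div_lt_one_div_of_lt hH0 hh1)
    obtain ⟨n, hn1, hn2⟩ := (hK.and (hinf.eventually_gt_atTop K)).exists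
    linarith
  · by_contra hcon
    push Not at hcon
    obtain ⟨h, hh1, hh2⟩ := exists_between (max_lt hcon hH0)
    have h0 : 0 < h := (le_max_right _ _).trans_lt hh1
    have h1 : 1 - ξm < h := (le_max_left _ _).trans_lt hh1
    obtain ⟨K, hK⟩ := (hV0 (1 / h) (one_div_lt_one_div_of_lt h0 hh2)).bddAbove_range
    have := low_bound x h K h0 (by linarith) ν (fun n => hK ⟨n, rfl⟩) ξm hm
    linarith
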